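/- Let σ and w be Radon measures on ℝ with finite Muckenhoupt–Poisson constants [σ,w]_{A₂}* and [w,σ]_{A₂}*, and suppose sup_{ε>0} |B_ε(1_I, 1_I)| < ∞ for every finite interval I. Then there exists a bilinear form B : 𝓕 × 𝓕 → ℝ such that B(f,g) = ∬ (x−y)⁻¹ f(y) g(x) dσ(y) dw(x) for all disjointly supported f, g ∈ 𝓕. If, in addition, there is a constant C such that sup_{ε>0} ‖1_I H_ε(1_I dσ)‖_{L²(w)} ≤ C σ(I)^{1/2} and sup_{ε>0} ‖1_I H_ε(1_I dw)‖_{L²(σ)} ≤ C w(I)^{1/2} for all finite intervals I, then B satisfies the local testing conditions |B(1_I, 1_I g)| ≤ C σ(I)^{1/2} ‖g‖_{L²(w)} and |B(1_I f, 1_I)| ≤ C ‖f‖_{L²(σ)} w(I)^{1/2} for all f, g ∈ 𝓕 and all finite intervals I. -/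

import Mathlib

/-!
`B` is a limit of the truncated pairings `B_ε` along an ultrafilter converging to `0⁺`: bilinearity
and the testing inequalities pass to the limit, once every family `ε ↦ B_ε(f, g)` is known to be
bounded.

The analytic content is that `(x - y)⁻¹` is `σ × w`-integrable across a cut, i.e. for `y` in a lower
set `D` and `x` outside it, both kept in sets `E` and `F` of finite measure. Fix `y` and let `S(y)`
be the `σ`-measure of `E ∩ [y, ∞)`. Applying the `A₂` condition to the interval `D ∩ [y, ∞)`, whose
center lies between `y` and every `x ∉ D`, and then Cauchy–Schwarz, gives
`∫_F (x - y)⁻¹ dw(x) ≲ S(y)^{-1/2}`. Since `σ {y ∈ E | S(y) < u} ≤ u`, the layer cake formula shows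
that `S^{-1/2}` is integrable. Cutting by a lower set rather than at a point makes it unnecessary to
discuss atoms at the endpoints.

Consequently `B_ε(f, g)` converges to the Hilbert pairing by dominated convergence when `f` and `g`
have disjoint supports. For two intervals `I` and `J`, split off `I ∩ J`: the pair `(I ∩ J, I ∩ J)`
is controlled by weak boundedness, and all the other pairs of pieces are disjoint. Finally, testing
of the truncated Hilbert transforms implies local testing of `B_ε` by Cauchy–Schwarz and the
antisymmetry of the kernel.
-/

open MeasureTheory Set
open scoped ENNReal

noncomputable section

/-- `𝓕`: finite linear combinations of indicator functions of finite half-open intervals. -/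
def InF (f : ℝ → ℝ) : Prop :=
  f ∈ Submodule.span ℝ {g : ℝ → ℝ | ∃ a b : ℝ, g = (Set.Ico a b).indicator 1}

/-- The `L²(μ)` norm of a function. -/
def l2norm (μ : Measure ℝ) (f : ℝ → ℝ) : ℝ :=
  Real.sqrt (∫ x, f x ^ 2 ∂μ)

/-- The iterated-integral Hilbert pairing `∬ f(y) g(x) (x-y)⁻¹ dσ(y) dw(x)`. -/
def hilbertPairing (σ w : Measure ℝ) (f g : ℝ → ℝ) : ℝ :=
  ∫ x, (∫ y, f y * (x - y)⁻¹ ∂σ) * g x ∂w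

/-- `f` and `g` are supported on disjoint intervals. -/
def DisjointlySupported (f g : ℝ → ℝ) : Prop :=
  ∃ I J : Set ℝ, I.OrdConnected ∧ J.OrdConnected ∧ Disjoint I J ∧
    Function.support f ⊆ I ∧ Function.support g ⊆ J

/-- `B` is bilinear on `𝓕`. -/
def BilinearOnF (B : (ℝ → ℝ) → (ℝ → ℝ) → ℝ) : Prop :=
  (∀ f f' g, InF f → InF f' → InF g → B (f + f') g = B f g + B f' g) ∧
  (∀ (c : ℝ) (f g : ℝ → ℝ), InF f → InF g → B (c • f) g = c * B f g) ∧
  (∀ f g g', InF f → InF g → InF g' → B f (g + g') = B f g + B f g') ∧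
  (∀ (c : ℝ) (f g : ℝ → ℝ), InF f → InF g → B f (c • g) = c * B f g)

/-- Local (Sawyer-type) testing conditions with constants `H`, `H'`. -/
def LocalTesting (σ w : Measure ℝ) (B : (ℝ → ℝ) → (ℝ → ℝ) → ℝ) (H H' : ℝ) : Prop :=
  (∀ (a b : ℝ) (g : ℝ → ℝ), a < b → InF g →
    |B ((Set.Ico a b).indicator 1) ((Set.Ico a b).indicator g)| ≤
      H * Real.sqrt (σ (Set.Ico a b)).toReal * l2norm w g) ∧
  (∀ (a b : ℝ) (f : ℝ → ℝ), a < b → InF f →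
    |B ((Set.Ico a b).indicator f) ((Set.Ico a b).indicator 1)| ≤
      H' * l2norm σ f * Real.sqrt (w (Set.Ico a b)).toReal)

/-- The truncated Hilbert pairing
`B_ε(f,g) = ∬_{|x-y|>ε} (x-y)⁻¹ f(y) g(x) dσ(y) dw(x)`. -/
def truncPairing (σ w : Measure ℝ) (f g : ℝ → ℝ) (ε : ℝ) : ℝ :=
  ∫ x, (∫ y, (if ε < |x - y| then (x - y)⁻¹ * f y else 0) ∂σ) * g x ∂w

/-- The truncated Hilbert transform `H_ε(f dμ)(x) = ∫_{|x-y|>ε} (x-y)⁻¹ f(y) dμ(y)`. -/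
def truncHilbert (μ : Measure ℝ) (f : ℝ → ℝ) (ε : ℝ) (x : ℝ) : ℝ :=
  ∫ y, (if ε < |x - y| then (x - y)⁻¹ * f y else 0) ∂μ

/-- The Muckenhoupt–Poisson `A₂` condition `[σ,w]_{A₂}* ≤ A`: for every finite interval `I`
with center `c_I`, `σ(I) ∫_{Iᶜ} (x - c_I)⁻² dw(x) ≤ A²`. -/
def A2star (σ w : Measure ℝ) (A : ℝ) : Prop :=
  ∀ I : Set ℝ, I.OrdConnected → Bornology.IsBounded I →
    σ I * ∫⁻ x in Iᶜ, ENNReal.ofReal (((x - (sInf I + sSup I) / 2) ^ 2)⁻¹) ∂w ≤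
      ENNReal.ofReal (A ^ 2)

open Filter Topology Asymptotics

/-! ### Small tails of a measure -/

lemma measure_setOf_measure_Ici_lt_le {α : Type*} [LinearOrder α] [TopologicalSpace α]
    [OrderClosedTopology α] [MeasurableSpace α] [BorelSpace α] (μ : Measure α) [μ.InnerRegular]
    (u : ℝ≥0∞) : μ {y | μ (Ici y) < u} ≤ u := by
  have hanti : Antitone fun y => μ (Ici y) := fun _ _ h => measure_mono (Ici_subset_Ici.2 h)
  by_contra! hlt
  obtain ⟨K, hKu, hK, huK⟩ :=
    (measurableSet_lt hanti.measurable measurable_const).exists_lt_isCompact hlt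
  obtain ⟨y, hyK, hy⟩ := hK.exists_isLeast (nonempty_of_measure_ne_zero huK.ne_bot)
  exact (huK.trans_le (measure_mono hy)).not_gt (hKu hyK)

section SmallSublevel

variable {α : Type*} [MeasurableSpace α] {μ : Measure α} {S : α → ℝ≥0∞}

lemma ae_ne_zero_of_forall_measure_lt_le (h : ∀ u, μ {x | S x < u} ≤ u) :
    ∀ᵐ x ∂μ, S x ≠ 0 := by
  suffices μ {x | S x = 0} ≤ 0 from measure_eq_zero_iff_ae_notMem.1 (nonpos_iff_eq_zero.1 this)
  refine le_of_forall_gt_imp_ge_of_dense fun u hu => (measure_mono fun x hx => ?_).trans (h u)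
  exact (mem_ofPred.1 hx).trans_lt hu

lemma measure_lt_toReal_rpow_neg_le (h : ∀ u, μ {x | S x < u} ≤ u) {p t : ℝ} (hp : 0 < p)
    (ht : 0 < t) : μ {x | t < (S x ^ (-p)).toReal} ≤ ENNReal.ofReal (t ^ (-p⁻¹)) := by
  refine (measure_mono fun x hx => ?_).trans (h _)
  have hlt : ENNReal.ofReal t < S x ^ (-p) :=
    ENNReal.ofReal_lt_iff_lt_toReal ht.le
      (fun htop => by simp [htop, ht.not_gt] at hx) |>.2 hx
  rw [ENNReal.rpow_neg, ENNReal.lt_inv_iff_lt_inv, ← ENNReal.lt_rpow_inv_iff hp,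
    ENNReal.inv_rpow, ← ENNReal.rpow_neg, ENNReal.ofReal_rpow_of_pos ht] at hlt
  exact hlt

lemma lintegral_rpow_neg_lt_top [IsFiniteMeasure μ] (hS : AEMeasurable S μ)
    (h : ∀ u, μ {x | S x < u} ≤ u) {p : ℝ} (hp₀ : 0 < p) (hp₁ : p < 1) :
    ∫⁻ x, S x ^ (-p) ∂μ < ∞ := by
  have hfin : ∀ᵐ x ∂μ, S x ^ (-p) ≠ ∞ := by
    filter_upwards [ae_ne_zero_of_forall_measure_lt_le h] with x hx
    simp [ENNReal.rpow_eq_top_iff, hx, hp₀.le]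
  have htail : IntegrableOn (fun t : ℝ => t ^ (-p⁻¹)) (Ioi 1) :=
    integrableOn_Ioi_rpow_of_lt (neg_lt_neg ((one_lt_inv₀ hp₀).2 hp₁)) one_pos
  calc ∫⁻ x, S x ^ (-p) ∂μ
      = ∫⁻ x, ENNReal.ofReal (S x ^ (-p)).toReal ∂μ :=
        lintegral_congr_ae (hfin.mono fun x hx => (ENNReal.ofReal_toReal hx).symm)
    _ = ∫⁻ t in Ioi 0, μ {x | t < (S x ^ (-p)).toReal} :=
        lintegral_eq_lintegral_meas_lt μ (.of_forall fun _ => ENNReal.toReal_nonneg)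
          (hS.pow_const _).ennreal_toReal
    _ ≤ (∫⁻ t in Ioc (0 : ℝ) 1, μ {x | t < (S x ^ (-p)).toReal})
          + ∫⁻ t in Ioi 1, μ {x | t < (S x ^ (-p)).toReal} := by
        rw [← Ioc_union_Ioi_eq_Ioi zero_le_one]
        exact lintegral_union_le _ _ _
    _ ≤ (∫⁻ _ in Ioc (0 : ℝ) 1, μ univ) + ∫⁻ t in Ioi 1, ENNReal.ofReal (t ^ (-p⁻¹)) :=
        add_le_add (lintegral_mono fun _ => measure_mono (subset_univ _))
          (setLIntegral_mono' measurableSet_Ioi fun t ht =>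
            measure_lt_toReal_rpow_neg_le h hp₀ (one_pos.trans ht))
    _ < ∞ := ENNReal.add_lt_top.2 ⟨by simp, htail.setLIntegral_lt_top⟩

lemma lintegral_le_rpow_measure_univ_mul_lintegral_sq {f : α → ℝ≥0∞} (hf : AEMeasurable f μ) :
    ∫⁻ x, f x ∂μ ≤ (μ univ * ∫⁻ x, f x ^ 2 ∂μ) ^ (1 / 2 : ℝ) := by
  have := ENNReal.lintegral_mul_le_Lp_mul_Lq μ Real.HolderConjugate.two_two
    (aemeasurable_const (b := 1)) hf
  simpa [ENNReal.mul_rpow_of_nonneg] using this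

end SmallSublevel

/-! ### The Hilbert kernel across a cut -/

/-- The Hilbert kernel `(x, y) ↦ (x - y)⁻¹`, equal to `0` on the diagonal. -/
def hilbertKernel (z : ℝ × ℝ) : ℝ := (z.1 - z.2)⁻¹

@[fun_prop]
lemma measurable_hilbertKernel : Measurable hilbertKernel := by
  unfold hilbertKernel
  fun_prop

lemma hilbertKernel_swap (z : ℝ × ℝ) : hilbertKernel z.swap = -hilbertKernel z := by
  simp only [hilbertKernel, Prod.fst_swap, Prod.snd_swap, ← inv_neg, neg_sub]

lemma enorm_hilbertKernel_sq (x y : ℝ) :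
    ‖hilbertKernel (x, y)‖ₑ ^ 2 = ENNReal.ofReal (((x - y) ^ 2)⁻¹) := by
  rw [← enorm_pow, Real.enorm_of_nonneg (by positivity), hilbertKernel, inv_pow]

section Cut

variable {σ w : Measure ℝ} {A : ℝ} {D E F : Set ℝ} {y : ℝ}

/-- The center `c` of `D ∩ [y, ∞)` lies between `y` and every `x ∉ D`, so `(x - y)⁻²` is at most
the Poisson weight `(x - c)⁻²`. -/
lemma A2star.measure_mul_lintegral_hilbertKernel_sq_le (hA : A2star σ w A) (hD : IsLowerSet D)
    (hy : y ∈ D) :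
    σ (D ∩ Ici y) * ∫⁻ x in Dᶜ, ‖hilbertKernel (x, y)‖ₑ ^ 2 ∂w ≤ ENNReal.ofReal (A ^ 2) := by
  rcases Dᶜ.eq_empty_or_nonempty with hDc | ⟨x₀, hx₀⟩
  · simp [hDc]
  have hle : ∀ x ∈ Dᶜ, ∀ z ∈ D, z ≤ x := fun x hx z hz =>
    le_of_not_ge fun hxz => hx (hD hxz hz)
  have hleast : IsLeast (D ∩ Ici y) y := ⟨⟨hy, self_mem_Ici⟩, fun _ hz => hz.2⟩
  have hbdd : Bornology.IsBounded (D ∩ Ici y) :=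
    (Metric.isBounded_Icc y x₀).subset fun z hz => ⟨hz.2, hle x₀ hx₀ z hz.1⟩
  refine le_trans ?_ (hA _ (hD.ordConnected.inter ordConnected_Ici) hbdd)
  rw [hleast.csInf_eq]
  gcongr σ (D ∩ Ici y) * ?_
  calc ∫⁻ x in Dᶜ, ‖hilbertKernel (x, y)‖ₑ ^ 2 ∂w
      ≤ ∫⁻ x in Dᶜ, ENNReal.ofReal (((x - (y + sSup (D ∩ Ici y)) / 2) ^ 2)⁻¹) ∂w := by
        refine setLIntegral_mono' hD.ordConnected.measurableSet.compl fun x hx => ?_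
        have hyx : y < x := (hle x hx y hy).lt_of_ne fun h => hx (h ▸ hy)
        have hsup_le : sSup (D ∩ Ici y) ≤ x :=
          csSup_le hleast.nonempty fun z hz => hle x hx z hz.1
        have hle_sup : y ≤ sSup (D ∩ Ici y) := le_csSup hbdd.bddAbove hleast.1
        have hpos : 0 < x - (y + sSup (D ∩ Ici y)) / 2 := by linarith
        rw [enorm_hilbertKernel_sq]
        gcongr
        linarith
    _ ≤ ∫⁻ x in (D ∩ Ici y)ᶜ, ENNReal.ofReal (((x - (y + sSup (D ∩ Ici y)) / 2) ^ 2)⁻¹) ∂w :=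
        lintegral_mono_set (compl_subset_compl.2 inter_subset_left)

lemma A2star.lintegral_hilbertKernel_le (hA : A2star σ w A) (hD : IsLowerSet D) (hE : E ⊆ D)
    (hF : F ⊆ Dᶜ) (hy : y ∈ E) (hσ : σ (E ∩ Ici y) ≠ 0) :
    ∫⁻ x in F, ‖hilbertKernel (x, y)‖ₑ ∂w ≤
      (w F * ENNReal.ofReal (A ^ 2)) ^ (1 / 2 : ℝ) * σ (E ∩ Ici y) ^ (-(1 / 2) : ℝ) := by
  have hsq : ∫⁻ x in F, ‖hilbertKernel (x, y)‖ₑ ^ 2 ∂w ≤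
      ENNReal.ofReal (A ^ 2) / σ (E ∩ Ici y) := by
    rw [ENNReal.le_div_iff_mul_le (.inl hσ) (.inr ENNReal.ofReal_ne_top), mul_comm]
    exact le_trans (by gcongr) (hA.measure_mul_lintegral_hilbertKernel_sq_le hD (hE hy))
  calc ∫⁻ x in F, ‖hilbertKernel (x, y)‖ₑ ∂w
      ≤ (w F * ∫⁻ x in F, ‖hilbertKernel (x, y)‖ₑ ^ 2 ∂w) ^ (1 / 2 : ℝ) := by
        simpa using lintegral_le_rpow_measure_univ_mul_lintegral_sq (μ := w.restrict F)
          (f := fun x => ‖hilbertKernel (x, y)‖ₑ) (by fun_prop)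
    _ ≤ (w F * (ENNReal.ofReal (A ^ 2) / σ (E ∩ Ici y))) ^ (1 / 2 : ℝ) := by gcongr
    _ = _ := by
        rw [div_eq_mul_inv, ← mul_assoc, ENNReal.mul_rpow_of_nonneg _ _ (by norm_num),
          ENNReal.inv_rpow, ENNReal.rpow_neg]

lemma A2star.lintegral_lintegral_hilbertKernel_lt_top (hA : A2star σ w A)
    (hD : IsLowerSet D) (hEm : MeasurableSet E) (hE : E ⊆ D) (hF : F ⊆ Dᶜ)
    (hσE : σ E ≠ ∞) (hwF : w F ≠ ∞) :
    ∫⁻ y in E, ∫⁻ x in F, ‖hilbertKernel (x, y)‖ₑ ∂w ∂σ < ∞ := by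
  have : IsFiniteMeasure (σ.restrict E) := isFiniteMeasure_restrict.2 hσE
  set S : ℝ → ℝ≥0∞ := fun y => σ.restrict E (Ici y)
  have hS : Antitone S := fun _ _ h => measure_mono (Ici_subset_Ici.2 h)
  have hSE : ∀ y, σ (E ∩ Ici y) = S y := fun y => by
    simp only [S, Measure.restrict_apply measurableSet_Ici, inter_comm]
  have htail := measure_setOf_measure_Ici_lt_le (σ.restrict E)
  calc ∫⁻ y in E, ∫⁻ x in F, ‖hilbertKernel (x, y)‖ₑ ∂w ∂σ
      ≤ ∫⁻ y in E, (w F * ENNReal.ofReal (A ^ 2)) ^ (1 / 2 : ℝ) * S y ^ (-(1 / 2) : ℝ) ∂σ := by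
        refine lintegral_mono_ae ?_
        filter_upwards [ae_restrict_mem hEm, ae_ne_zero_of_forall_measure_lt_le htail]
          with y hy hSy
        rw [← hSE]
        exact hA.lintegral_hilbertKernel_le hD hE hF hy (hSE y ▸ hSy)
    _ = (w F * ENNReal.ofReal (A ^ 2)) ^ (1 / 2 : ℝ) * ∫⁻ y in E, S y ^ (-(1 / 2) : ℝ) ∂σ :=
        lintegral_const_mul _ (hS.measurable.pow_const _)
    _ < ∞ := ENNReal.mul_lt_top
        (ENNReal.rpow_lt_top_of_nonneg (by norm_num) (ENNReal.mul_ne_top hwF (by simp)))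
        (lintegral_rpow_neg_lt_top hS.measurable.aemeasurable htail (by norm_num) (by norm_num))

end Cut

/-! ### Truncated kernels and pairings -/

/-- The kernel of the truncated Hilbert transform: the Hilbert kernel cut off to `|x - y| > ε`. -/
def truncKernel (ε : ℝ) : ℝ × ℝ → ℝ := {z | ε < |z.1 - z.2|}.indicator hilbertKernel

@[fun_prop]
lemma measurable_truncKernel (ε : ℝ) : Measurable (truncKernel ε) :=
  measurable_hilbertKernel.indicator (measurableSet_lt measurable_const (by fun_prop))

lemma truncKernel_mul (ε x y c : ℝ) :
    truncKernel ε (x, y) * c = if ε < |x - y| then (x - y)⁻¹ * c else 0 := by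
  simp only [truncKernel, hilbertKernel, indicator_apply, mem_ofPred_eq, ite_mul, zero_mul]

lemma truncKernel_swap (ε : ℝ) (z : ℝ × ℝ) : truncKernel ε z.swap = -truncKernel ε z := by
  simp only [truncKernel, indicator_apply, mem_ofPred_eq, hilbertKernel_swap, Prod.fst_swap,
    Prod.snd_swap, abs_sub_comm z.2 z.1]
  split_ifs <;> simp

lemma norm_truncKernel_le_norm_hilbertKernel (ε : ℝ) (z : ℝ × ℝ) :
    ‖truncKernel ε z‖ ≤ ‖hilbertKernel z‖ :=
  norm_indicator_le_norm_self _ _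

lemma norm_truncKernel_le {ε : ℝ} (hε : 0 < ε) (z : ℝ × ℝ) : ‖truncKernel ε z‖ ≤ ε⁻¹ := by
  by_cases hz : ε < |z.1 - z.2|
  · rw [truncKernel, indicator_of_mem (by exact hz), hilbertKernel, norm_inv, Real.norm_eq_abs]
    gcongr
  · rw [truncKernel, indicator_of_notMem (by exact hz), norm_zero]
    positivity

/-- On the diagonal this relies on `0⁻¹ = 0`. -/
lemma tendsto_truncKernel (z : ℝ × ℝ) :
    Tendsto (truncKernel · z) (𝓝[>] 0) (𝓝 (hilbertKernel z)) := by
  refine tendsto_const_nhds.congr' ?_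
  by_cases hz : z.1 - z.2 = 0
  · exact .of_forall fun ε => by simp [truncKernel, hilbertKernel, indicator_apply, hz]
  · filter_upwards [nhdsWithin_le_nhds (Iio_mem_nhds (abs_pos.2 hz))] with ε hε
    exact (indicator_of_mem (by exact hε) _).symm

section Pairing

variable {σ w : Measure ℝ} {f f' g g' : ℝ → ℝ} {ε : ℝ}

lemma truncPairing_smul_left (c : ℝ) :
    truncPairing σ w (c • f) g ε = c * truncPairing σ w f g ε := by
  simp only [truncPairing, ← truncKernel_mul]
  simp only [Pi.smul_apply, smul_eq_mul, mul_left_comm _ c, integral_const_mul, mul_assoc]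

lemma truncPairing_smul_right (c : ℝ) :
    truncPairing σ w f (c • g) ε = c * truncPairing σ w f g ε := by
  simp only [truncPairing, Pi.smul_apply, smul_eq_mul, mul_left_comm _ c, integral_const_mul]

lemma integrable_hilbertKernel_mul_swap [SFinite σ] [SFinite w]
    (h : Integrable (fun z => hilbertKernel z * (g z.1 * f z.2)) (w.prod σ)) :
    Integrable (fun z => hilbertKernel z * (f z.1 * g z.2)) (σ.prod w) := by
  refine h.swap.neg.congr (.of_forall fun z => ?_)
  simp only [Pi.neg_apply, Function.comp_apply, hilbertKernel_swap, Prod.fst_swap, Prod.snd_swap]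
  ring

lemma hilbertPairing_eq_integral_prod [SFinite σ] [SFinite w]
    (h : Integrable (fun z => hilbertKernel z * (g z.1 * f z.2)) (w.prod σ)) :
    hilbertPairing σ w f g = ∫ z, hilbertKernel z * (g z.1 * f z.2) ∂w.prod σ := by
  rw [hilbertPairing, integral_prod _ h]
  simp only [hilbertKernel, ← integral_mul_const]
  congr! 4
  ring

lemma integrable_truncKernel_mul (hf : Integrable f σ) (hg : Integrable g w) (hε : 0 < ε) :
    Integrable (fun z => truncKernel ε z * (g z.1 * f z.2)) (w.prod σ) :=
  (hg.mul_prod hf).bdd_mul (measurable_truncKernel ε).aestronglyMeasurable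
    (.of_forall (norm_truncKernel_le hε))

variable [SFinite σ] [SFinite w]

lemma truncPairing_eq_integral_prod (hf : Integrable f σ) (hg : Integrable g w) (hε : 0 < ε) :
    truncPairing σ w f g ε = ∫ z, truncKernel ε z * (g z.1 * f z.2) ∂w.prod σ := by
  simp only [truncPairing, integral_prod _ (integrable_truncKernel_mul hf hg hε),
    ← truncKernel_mul, ← integral_mul_const]
  congr! 4
  ring

lemma truncPairing_swap (hf : Integrable f σ) (hg : Integrable g w) (hε : 0 < ε) :
    truncPairing w σ g f ε = -truncPairing σ w f g ε := by
  rw [truncPairing_eq_integral_prod hf hg hε, truncPairing_eq_integral_prod hg hf hε,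
    ← integral_prod_swap, ← integral_neg]
  congr! 2 with z
  rw [truncKernel_swap, Prod.fst_swap, Prod.snd_swap]
  ring

lemma truncPairing_add_left (hf : Integrable f σ) (hf' : Integrable f' σ) (hg : Integrable g w)
    (hε : 0 < ε) :
    truncPairing σ w (f + f') g ε = truncPairing σ w f g ε + truncPairing σ w f' g ε := by
  rw [truncPairing_eq_integral_prod (hf.add hf') hg hε, truncPairing_eq_integral_prod hf hg hε,
    truncPairing_eq_integral_prod hf' hg hε, ← integral_add
      (integrable_truncKernel_mul hf hg hε) (integrable_truncKernel_mul hf' hg hε)]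
  simp only [Pi.add_apply, mul_add]

lemma truncPairing_add_right (hf : Integrable f σ) (hg : Integrable g w) (hg' : Integrable g' w)
    (hε : 0 < ε) :
    truncPairing σ w f (g + g') ε = truncPairing σ w f g ε + truncPairing σ w f g' ε := by
  rw [truncPairing_swap (hg.add hg') hf hε, truncPairing_add_left hg hg' hf hε,
    truncPairing_swap hg hf hε, truncPairing_swap hg' hf hε, neg_add]

lemma tendsto_truncPairing_of_integrable (hf : Integrable f σ) (hg : Integrable g w)
    (h : Integrable (fun z => hilbertKernel z * (g z.1 * f z.2)) (w.prod σ)) :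
    Tendsto (truncPairing σ w f g) (𝓝[>] 0) (𝓝 (hilbertPairing σ w f g)) := by
  have hlim : Tendsto (fun ε => ∫ z, truncKernel ε z * (g z.1 * f z.2) ∂w.prod σ) (𝓝[>] 0)
      (𝓝 (∫ z, hilbertKernel z * (g z.1 * f z.2) ∂w.prod σ)) := by
    refine tendsto_integral_filter_of_dominated_convergence _ ?_ ?_ h.norm ?_
    · filter_upwards [self_mem_nhdsWithin] with ε hε
      exact (integrable_truncKernel_mul hf hg hε).aestronglyMeasurable
    · refine .of_forall fun ε => .of_forall fun z => ?_
      rw [norm_mul, norm_mul (hilbertKernel z)]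
      gcongr
      exact norm_truncKernel_le_norm_hilbertKernel ε z
    · exact .of_forall fun z => (tendsto_truncKernel z).mul_const _
  rw [hilbertPairing_eq_integral_prod h]
  refine hlim.congr' ?_
  filter_upwards [self_mem_nhdsWithin] with ε hε
  exact (truncPairing_eq_integral_prod hf hg hε).symm

end Pairing

/-! ### Separated supports -/

/-- The support of `f` lies strictly to the left of the support of `g`. -/
def SupportedLeftOf (f g : ℝ → ℝ) : Prop :=
  ∀ y ∈ Function.support f, ∀ x ∈ Function.support g, y < x

lemma forall_lt_or_forall_lt_of_disjoint_of_ordConnected {α : Type*} [LinearOrder α]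
    {s t : Set α} (hs : s.OrdConnected) (ht : t.OrdConnected) (hst : Disjoint s t) :
    (∀ x ∈ s, ∀ y ∈ t, x < y) ∨ ∀ y ∈ t, ∀ x ∈ s, y < x := by
  by_contra! ⟨⟨x, hx, y, hy, hyx⟩, y', hy', x', hx', hxy'⟩
  rcases le_total x y' with h | h
  · exact disjoint_left.1 hst hx (ht.out hy hy' ⟨hyx, h⟩)
  · exact disjoint_left.1 hst (hs.out hx' hx ⟨hxy', h⟩) hy'

lemma DisjointlySupported.supportedLeftOf_or {f g : ℝ → ℝ} (h : DisjointlySupported f g) :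
    SupportedLeftOf f g ∨ SupportedLeftOf g f := by
  obtain ⟨I, J, hI, hJ, hIJ, hfI, hgJ⟩ := h
  exact (forall_lt_or_forall_lt_of_disjoint_of_ordConnected hI hJ hIJ).imp
    (fun h y hy x hx => h y (hfI hy) x (hgJ hx)) fun h x hx y hy => h x (hgJ hx) y (hfI hy)

lemma SupportedLeftOf.integrable_hilbertKernel_mul {σ w : Measure ℝ} [IsLocallyFiniteMeasure σ]
    [IsLocallyFiniteMeasure w] {A : ℝ} (hA : A2star σ w A) {f g : ℝ → ℝ}
    (h : SupportedLeftOf f g) (hf : MemLp f ∞ σ) (hfc : HasCompactSupport f)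
    (hg : MemLp g ∞ w) (hgc : HasCompactSupport g) :
    Integrable (fun z => hilbertKernel z * (g z.1 * f z.2)) (w.prod σ) := by
  set D : Set ℝ := ↑(lowerClosure (Function.support f))
  have hD : IsLowerSet D := (lowerClosure _).lower
  have hDm : MeasurableSet D := hD.ordConnected.measurableSet
  have hfD : Function.support f ⊆ D := subset_lowerClosure
  have hgD : Function.support g ⊆ Dᶜ := fun x hx ⟨y, hy, hxy⟩ => (h y hy x hx).not_ge hxy
  set E := D ∩ tsupport f
  set F := Dᶜ ∩ tsupport g
  have hσE : σ E < ∞ := (measure_mono inter_subset_right).trans_lt hfc.measure_lt_top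
  have hwF : w F < ∞ := (measure_mono inter_subset_right).trans_lt hgc.measure_lt_top
  have : IsFiniteMeasure (σ.restrict E) := isFiniteMeasure_restrict.2 hσE.ne
  have : IsFiniteMeasure (w.restrict F) := isFiniteMeasure_restrict.2 hwF.ne
  have hkernel : Integrable hilbertKernel ((w.restrict F).prod (σ.restrict E)) := by
    refine ⟨measurable_hilbertKernel.aestronglyMeasurable, ?_⟩
    rw [HasFiniteIntegral, lintegral_prod_symm _ (by fun_prop)]
    exact hA.lintegral_lintegral_hilbertKernel_lt_top hD
      (hDm.inter (isClosed_tsupport f).measurableSet) inter_subset_left inter_subset_left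
      hσE.ne hwF.ne
  have hgf : MemLp (fun z : ℝ × ℝ => g z.1 * f z.2) ∞ ((w.restrict F).prod (σ.restrict E)) :=
    ((hf.restrict E).comp_snd _).mul ((hg.restrict F).comp_fst _)
  have hsupp : Function.support (fun z : ℝ × ℝ => hilbertKernel z * (g z.1 * f z.2)) ⊆ F ×ˢ E := by
    intro z hz
    have hgz : z.1 ∈ Function.support g := left_ne_zero_of_mul (right_ne_zero_of_mul hz)
    have hfz : z.2 ∈ Function.support f := right_ne_zero_of_mul (right_ne_zero_of_mul hz)
    exact ⟨⟨hgD hgz, subset_tsupport g hgz⟩, hfD hfz, subset_tsupport f hfz⟩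
  rw [← integrableOn_iff_integrable_of_support_subset hsupp, IntegrableOn, ← Measure.prod_restrict]
  exact (memLp_one_iff_integrable.2 hkernel).integrable_mul hgf

/-! ### Simple functions on half-open intervals -/

section InF

variable {f g : ℝ → ℝ}

lemma InF.indicator_one (a b : ℝ) : InF ((Ico a b).indicator 1) :=
  Submodule.subset_span ⟨a, b, rfl⟩

lemma InF.add (hf : InF f) (hg : InF g) : InF (f + g) :=
  Submodule.add_mem _ hf hg

lemma InF.smul (c : ℝ) (hf : InF f) : InF (c • f) :=
  Submodule.smul_mem _ c hf

@[elab_as_elim]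
lemma InF.induction {motive : ∀ f, InF f → Prop}
    (indicator : ∀ a b, motive ((Ico a b).indicator 1) (.indicator_one a b))
    (add : ∀ f g (hf : InF f) (hg : InF g), motive f hf → motive g hg → motive (f + g) (hf.add hg))
    (smul : ∀ (c : ℝ) f (hf : InF f), motive f hf → motive (c • f) (hf.smul c))
    {f : ℝ → ℝ} (hf : InF f) : motive f hf :=
  Submodule.span_induction (by rintro _ ⟨a, b, rfl⟩; exact indicator a b)
    (by simpa using! indicator 0 0) add smul hf

lemma InF.indicator (hf : InF f) (a b : ℝ) : InF ((Ico a b).indicator f) := by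
  induction hf using InF.induction with
  | indicator c d =>
    rw [indicator_indicator, Ico_inter_Ico]
    exact .indicator_one _ _
  | add f g _ _ hf hg =>
    rw [indicator_add']
    exact hf.add hg
  | smul c f _ hf =>
    convert hf.smul c using 1
    exact indicator_const_smul _ c f

lemma InF.memLp (hf : InF f) (p : ℝ≥0∞) (μ : Measure ℝ) [IsLocallyFiniteMeasure μ] :
    MemLp f p μ := by
  induction hf using InF.induction with
  | indicator a b => exact memLp_indicator_const p measurableSet_Ico 1 (.inr measure_Ico_lt_top.ne)
  | add f g _ _ hf hg => exact hf.add hg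
  | smul c f _ hf => exact hf.const_smul c

lemma InF.integrable (hf : InF f) (μ : Measure ℝ) [IsLocallyFiniteMeasure μ] : Integrable f μ :=
  memLp_one_iff_integrable.1 (hf.memLp 1 μ)

lemma InF.hasCompactSupport (hf : InF f) : HasCompactSupport f := by
  induction hf using InF.induction with
  | indicator a b =>
    exact .intro isCompact_Icc fun x hx =>
      indicator_of_notMem (fun h => hx (Ico_subset_Icc_self h)) 1
  | add f g _ _ hf hg => exact hf.add hg
  | smul c f _ hf => exact hf.smul_left (f := fun _ => c)

end InF

lemma tendsto_truncPairing_of_disjointlySupported {σ w : Measure ℝ} [IsLocallyFiniteMeasure σ]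
    [IsLocallyFiniteMeasure w] {A A' : ℝ} (hA : A2star σ w A) (hA' : A2star w σ A')
    {f g : ℝ → ℝ} (hf : InF f) (hg : InF g) (hfg : DisjointlySupported f g) :
    Tendsto (truncPairing σ w f g) (𝓝[>] 0) (𝓝 (hilbertPairing σ w f g)) := by
  refine tendsto_truncPairing_of_integrable (hf.integrable σ) (hg.integrable w) ?_
  rcases hfg.supportedLeftOf_or with h | h
  · exact h.integrable_hilbertKernel_mul hA (hf.memLp ∞ σ) hf.hasCompactSupport (hg.memLp ∞ w)
      hg.hasCompactSupport
  · exact integrable_hilbertKernel_mul_swap <| h.integrable_hilbertKernel_mul hA' (hg.memLp ∞ w)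
      hg.hasCompactSupport (hf.memLp ∞ σ) hf.hasCompactSupport

/-! ### Boundedness of the truncated pairings -/

lemma disjointlySupported_indicator {s t : Set ℝ} (hs : s.OrdConnected) (ht : t.OrdConnected)
    (hst : Disjoint s t) (f g : ℝ → ℝ) :
    DisjointlySupported (s.indicator f) (t.indicator g) :=
  ⟨s, t, hs, ht, hst, support_indicator_subset, support_indicator_subset⟩

lemma indicator_Ico_eq_add {α M : Type*} [LinearOrder α] [AddZeroClass M] {a b c : α}
    (hab : a ≤ b) (hbc : b ≤ c) (f : α → M) :
    (Ico a c).indicator f = (Ico a b).indicator f + (Ico b c).indicator f := by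
  rw [← Ico_union_Ico_eq_Ico hab hbc, indicator_union_of_disjoint (Ico_disjoint_Ico_same)]
  rfl

/-- The pairings `B_ε(f, g)` stay bounded as `ε → 0⁺`. -/
def TruncPairingBounded (σ w : Measure ℝ) (f g : ℝ → ℝ) : Prop :=
  truncPairing σ w f g =O[𝓝[>] 0] (1 : ℝ → ℝ)

section TruncPairingBounded

variable {σ w : Measure ℝ} {f f' g g' : ℝ → ℝ}

lemma TruncPairingBounded.smul_left (h : TruncPairingBounded σ w f g) (c : ℝ) :
    TruncPairingBounded σ w (c • f) g :=
  (h.const_mul_left c).congr_left fun _ => (truncPairing_smul_left c).symm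

lemma TruncPairingBounded.smul_right (h : TruncPairingBounded σ w f g) (c : ℝ) :
    TruncPairingBounded σ w f (c • g) :=
  (h.const_mul_left c).congr_left fun _ => (truncPairing_smul_right c).symm

lemma TruncPairingBounded.add_left [SFinite σ] [SFinite w] (h : TruncPairingBounded σ w f g)
    (h' : TruncPairingBounded σ w f' g) (hf : Integrable f σ) (hf' : Integrable f' σ)
    (hg : Integrable g w) : TruncPairingBounded σ w (f + f') g := by
  refine (h.add h').congr' ?_ .rfl
  filter_upwards [self_mem_nhdsWithin] with ε hε
  exact (truncPairing_add_left hf hf' hg hε).symm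

lemma TruncPairingBounded.add_right [SFinite σ] [SFinite w] (h : TruncPairingBounded σ w f g)
    (h' : TruncPairingBounded σ w f g') (hf : Integrable f σ) (hg : Integrable g w)
    (hg' : Integrable g' w) : TruncPairingBounded σ w f (g + g') := by
  refine (h.add h').congr' ?_ .rfl
  filter_upwards [self_mem_nhdsWithin] with ε hε
  exact (truncPairing_add_right hf hg hg' hε).symm

variable [IsLocallyFiniteMeasure σ] [IsLocallyFiniteMeasure w]

lemma truncPairingBounded_indicator_Ico
    (hdisj : ∀ f g, InF f → InF g → DisjointlySupported f g → TruncPairingBounded σ w f g)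
    (hdiag : ∀ a b, a < b →
      TruncPairingBounded σ w ((Ico a b).indicator 1) ((Ico a b).indicator 1)) (a b c d : ℝ) :
    TruncPairingBounded σ w ((Ico a b).indicator 1) ((Ico c d).indicator 1) := by
  have int (μ : Measure ℝ) [IsLocallyFiniteMeasure μ] (a b : ℝ) :
      Integrable ((Ico a b).indicator 1) μ := (InF.indicator_one a b).integrable μ
  have hIco {a b c d : ℝ} (h : Disjoint (Ico a b) (Ico c d)) :
      TruncPairingBounded σ w ((Ico a b).indicator 1) ((Ico c d).indicator 1) :=
    hdisj _ _ (.indicator_one a b) (.indicator_one c d)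
      (disjointlySupported_indicator ordConnected_Ico ordConnected_Ico h 1 1)
  rcases le_or_gt (min b d) (max a c) with hmM | hmM
  · exact hIco (Ico_disjoint_Ico.2 hmM)
  set m := max a c
  set M := min b d
  have hmiddle : TruncPairingBounded σ w ((Ico m M).indicator 1) ((Ico c d).indicator 1) := by
    rw [indicator_Ico_eq_add (le_max_right a c) (hmM.le.trans (min_le_right b d)),
      indicator_Ico_eq_add hmM.le (min_le_right b d)]
    exact (hIco Ico_disjoint_Ico_same.symm).add_right
      ((hdiag m M hmM).add_right (hIco Ico_disjoint_Ico_same) (int σ m M) (int w m M) (int w M d))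
      (int σ m M) (int w c m) ((int w m M).add (int w M d))
  rw [indicator_Ico_eq_add (le_max_left a c) (hmM.le.trans (min_le_left b d)),
    indicator_Ico_eq_add hmM.le (min_le_left b d)]
  exact (hIco (Ico_disjoint_Ico.2 (min_le_left m d))).add_left
    (hmiddle.add_left (hIco (Ico_disjoint_Ico.2 (le_max_left M c))) (int σ m M) (int σ M b)
      (int w c d)) (int σ a m) ((int σ m M).add (int σ M b)) (int w c d)

lemma InF.truncPairingBounded (h : ∀ a b c d,
      TruncPairingBounded σ w ((Ico a b).indicator 1) ((Ico c d).indicator 1))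
    (hf : InF f) (hg : InF g) : TruncPairingBounded σ w f g := by
  induction hf using InF.induction with
  | indicator a b =>
    induction hg using InF.induction with
    | indicator c d => exact h a b c d
    | add g g' hg hg' ihg ihg' =>
      exact ihg.add_right ihg' ((InF.indicator_one a b).integrable σ) (hg.integrable w)
        (hg'.integrable w)
    | smul c g _ ihg => exact ihg.smul_right c
  | add f f' hf hf' ihf ihf' =>
    exact ihf.add_left ihf' (hf.integrable σ) (hf'.integrable σ) (hg.integrable w)
  | smul c f _ ihf => exact ihf.smul_left c

end TruncPairingBounded

/-! ### Generalized limits -/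

lemma exists_tendsto_of_isBigO_one {ι E : Type*} [SeminormedAddCommGroup E] [ProperSpace E]
    {l : Ultrafilter ι} {u : ι → E} (h : u =O[l] (1 : ι → ℝ)) : ∃ a, Tendsto u l (𝓝 a) := by
  obtain ⟨C, hC⟩ := (isBigO_one_iff ℝ).1 h
  obtain ⟨a, -, ha⟩ := (isCompact_closedBall (0 : E) C).ultrafilter_le_nhds (l.map u)
    (le_principal_iff.2 ((eventually_map.1 hC).mono fun i hi => mem_closedBall_zero_iff.2 hi))
  exact ⟨a, ha⟩

/-- An ultrafilter of truncation parameters `ε → 0⁺`: bounded pairings converge along it, although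
their limit along `𝓝[>] 0` need not exist. -/
def truncUltrafilter : Ultrafilter ℝ := .of (𝓝[>] 0)

lemma truncUltrafilter_le : (truncUltrafilter : Filter ℝ) ≤ 𝓝[>] 0 := Ultrafilter.of_le _

/-- The generalized limit, along `truncUltrafilter`, of the truncated pairings `B_ε(f, g)`. -/
def limPairing (σ w : Measure ℝ) (f g : ℝ → ℝ) : ℝ :=
  limUnder truncUltrafilter (truncPairing σ w f g)

lemma TruncPairingBounded.tendsto_limPairing {σ w : Measure ℝ} {f g : ℝ → ℝ}
    (h : TruncPairingBounded σ w f g) :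
    Tendsto (truncPairing σ w f g) truncUltrafilter (𝓝 (limPairing σ w f g)) :=
  tendsto_nhds_limUnder (exists_tendsto_of_isBigO_one (h.mono truncUltrafilter_le))

section OfTendsto

variable {ι : Type*} {l : Filter ι} [l.NeBot] {T : ι → (ℝ → ℝ) → (ℝ → ℝ) → ℝ}
  {B : (ℝ → ℝ) → (ℝ → ℝ) → ℝ}

lemma BilinearOnF.of_tendsto (hT : ∀ᶠ i in l, BilinearOnF (T i))
    (hTB : ∀ f g, InF f → InF g → Tendsto (T · f g) l (𝓝 (B f g))) : BilinearOnF B := by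
  refine ⟨fun f f' g hf hf' hg => ?_, fun c f g hf hg => ?_, fun f g g' hf hg hg' => ?_,
    fun c f g hf hg => ?_⟩
  · exact tendsto_nhds_unique_of_eventuallyEq (hTB _ _ (hf.add hf') hg)
      ((hTB _ _ hf hg).add (hTB _ _ hf' hg)) (hT.mono fun _ hi => hi.1 f f' g hf hf' hg)
  · exact tendsto_nhds_unique_of_eventuallyEq (hTB _ _ (hf.smul c) hg)
      ((hTB _ _ hf hg).const_mul c) (hT.mono fun _ hi => hi.2.1 c f g hf hg)
  · exact tendsto_nhds_unique_of_eventuallyEq (hTB _ _ hf (hg.add hg'))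
      ((hTB _ _ hf hg).add (hTB _ _ hf hg')) (hT.mono fun _ hi => hi.2.2.1 f g g' hf hg hg')
  · exact tendsto_nhds_unique_of_eventuallyEq (hTB _ _ hf (hg.smul c))
      ((hTB _ _ hf hg).const_mul c) (hT.mono fun _ hi => hi.2.2.2 c f g hf hg)

lemma LocalTesting.of_tendsto {σ w : Measure ℝ} {H H' : ℝ}
    (hT : ∀ᶠ i in l, LocalTesting σ w (T i) H H')
    (hTB : ∀ f g, InF f → InF g → Tendsto (T · f g) l (𝓝 (B f g))) :
    LocalTesting σ w B H H' :=
  ⟨fun a b g hab hg => le_of_tendsto (hTB _ _ (.indicator_one a b) (hg.indicator a b)).abs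
      (hT.mono fun _ hi => hi.1 a b g hab hg),
    fun a b f hab hf => le_of_tendsto (hTB _ _ (hf.indicator a b) (.indicator_one a b)).abs
      (hT.mono fun _ hi => hi.2 a b f hab hf)⟩

end OfTendsto

lemma bilinearOnF_truncPairing (σ w : Measure ℝ) [IsLocallyFiniteMeasure σ]
    [IsLocallyFiniteMeasure w] {ε : ℝ} (hε : 0 < ε) :
    BilinearOnF fun f g => truncPairing σ w f g ε :=
  ⟨fun _ _ _ hf hf' hg =>
      truncPairing_add_left (hf.integrable σ) (hf'.integrable σ) (hg.integrable w) hε,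
    fun c _ _ _ _ => truncPairing_smul_left c,
    fun _ _ _ hf hg hg' =>
      truncPairing_add_right (hf.integrable σ) (hg.integrable w) (hg'.integrable w) hε,
    fun c _ _ _ _ => truncPairing_smul_right c⟩

/-! ### Testing conditions -/

lemma abs_integral_mul_le_l2norm {μ : Measure ℝ} {f g : ℝ → ℝ} (hf : MemLp f 2 μ)
    (hg : MemLp g 2 μ) : |∫ x, f x * g x ∂μ| ≤ l2norm μ f * l2norm μ g := by
  have hholder := integral_mul_norm_le_Lp_mul_Lq (μ := μ) (f := f) (g := g)
    Real.HolderConjugate.two_two (by simpa using hf) (by simpa using hg)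
  refine abs_integral_le_integral_abs.trans ?_
  simpa [l2norm, Real.sqrt_eq_rpow, abs_mul] using hholder

lemma truncHilbert_restrict (μ : Measure ℝ) {s : Set ℝ} (hs : MeasurableSet s) (f : ℝ → ℝ)
    (ε : ℝ) : truncHilbert (μ.restrict s) f ε = truncHilbert μ (s.indicator f) ε := by
  ext x
  rw [truncHilbert, truncHilbert, ← integral_indicator hs]
  congr 1 with y
  by_cases hy : y ∈ s <;> simp [hy]

lemma memLp_truncHilbert {μ ν : Measure ℝ} [SFinite μ] [IsFiniteMeasure ν] {f : ℝ → ℝ}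
    (hf : Integrable f μ) {ε : ℝ} (hε : 0 < ε) (p : ℝ≥0∞) : MemLp (truncHilbert μ f ε) p ν := by
  have heq : truncHilbert μ f ε = fun x => ∫ y, truncKernel ε (x, y) * f y ∂μ := by
    simp only [truncKernel_mul]
    rfl
  rw [heq]
  refine .of_bound (C := ∫ y, ε⁻¹ * ‖f y‖ ∂μ) ?_ ?_
  · exact ((measurable_truncKernel ε).aestronglyMeasurable.mul
      hf.aestronglyMeasurable.comp_snd).integral_prod_right' (μ := ν)
  · refine .of_forall fun x => norm_integral_le_of_norm_le (hf.norm.const_mul _) ?_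
    refine .of_forall fun y => ?_
    rw [norm_mul]
    gcongr
    exact norm_truncKernel_le hε (x, y)

lemma abs_truncPairing_indicator_le {σ w : Measure ℝ} [SFinite σ] {s : Set ℝ}
    (hs : MeasurableSet s) (hws : w s ≠ ∞) {f g : ℝ → ℝ} (hf : IntegrableOn f s σ)
    (hg : MemLp g 2 w) {ε : ℝ} (hε : 0 < ε) :
    |truncPairing σ w (s.indicator f) (s.indicator g) ε| ≤
      l2norm w (s.indicator (truncHilbert (σ.restrict s) f ε)) * l2norm w g := by
  have : IsFiniteMeasure (w.restrict s) := isFiniteMeasure_restrict.2 hws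
  have heq : truncPairing σ w (s.indicator f) (s.indicator g) ε =
      ∫ x, s.indicator (truncHilbert (σ.restrict s) f ε) x * g x ∂w := by
    rw [truncHilbert_restrict σ hs]
    refine integral_congr_ae (.of_forall fun x => ?_)
    by_cases hx : x ∈ s <;> simp [hx, truncHilbert]
  rw [heq]
  exact abs_integral_mul_le_l2norm
    ((memLp_indicator_iff_restrict hs).2 (memLp_truncHilbert hf hε 2)) hg

lemma localTesting_truncPairing {σ w : Measure ℝ} [IsLocallyFiniteMeasure σ]
    [IsLocallyFiniteMeasure w] {H H' ε : ℝ} (hε : 0 < ε)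
    (hσ : ∀ a b, a < b →
      l2norm w ((Ico a b).indicator (truncHilbert (σ.restrict (Ico a b)) 1 ε)) ≤
        H * √(σ (Ico a b)).toReal)
    (hw : ∀ a b, a < b →
      l2norm σ ((Ico a b).indicator (truncHilbert (w.restrict (Ico a b)) 1 ε)) ≤
        H' * √(w (Ico a b)).toReal) :
    LocalTesting σ w (fun f g => truncPairing σ w f g ε) H H' := by
  have hone (μ : Measure ℝ) [IsLocallyFiniteMeasure μ] (a b : ℝ) :
      IntegrableOn (1 : ℝ → ℝ) (Ico a b) μ := integrableOn_const measure_Ico_lt_top.ne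
  refine ⟨fun a b g hab hg => ?_, fun a b f hab hf => ?_⟩
  · calc _ ≤ l2norm w ((Ico a b).indicator (truncHilbert (σ.restrict (Ico a b)) 1 ε)) *
          l2norm w g := abs_truncPairing_indicator_le measurableSet_Ico measure_Ico_lt_top.ne
            (hone σ a b) (hg.memLp 2 w) hε
      _ ≤ _ := mul_le_mul_of_nonneg_right (hσ a b hab) (Real.sqrt_nonneg _)
  · rw [← abs_neg, ← truncPairing_swap ((hf.indicator a b).integrable σ)
      ((InF.indicator_one a b).integrable w) hε]
    calc _ ≤ l2norm σ ((Ico a b).indicator (truncHilbert (w.restrict (Ico a b)) 1 ε)) *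
          l2norm σ f := abs_truncPairing_indicator_le measurableSet_Ico measure_Ico_lt_top.ne
            (hone w a b) (hf.memLp 2 σ) hε
      _ ≤ H' * √(w (Ico a b)).toReal * l2norm σ f :=
          mul_le_mul_of_nonneg_right (hw a b hab) (Real.sqrt_nonneg _)
      _ = _ := mul_right_comm _ _ _

theorem statement10 (σ w : Measure ℝ) [IsLocallyFiniteMeasure σ] [IsLocallyFiniteMeasure w]
    (A A' : ℝ) (hA : A2star σ w A) (hA' : A2star w σ A')
    -- `sup_{ε>0} |B_ε(1_I, 1_I)| < ∞` for every finite interval `I`: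
    (hWBP : ∀ a b : ℝ, a < b → ∃ M : ℝ, ∀ ε : ℝ, 0 < ε →
      |truncPairing σ w ((Set.Ico a b).indicator 1) ((Set.Ico a b).indicator 1) ε| ≤ M) :
    ∃ B : (ℝ → ℝ) → (ℝ → ℝ) → ℝ,
      BilinearOnF B ∧
      (∀ f g : ℝ → ℝ, InF f → InF g → DisjointlySupported f g →
        B f g = hilbertPairing σ w f g) ∧
      (∀ C : ℝ, 0 ≤ C →
        -- truncated interval testing for `σ` ...
        (∀ a b ε : ℝ, a < b → 0 < ε →
          l2norm w ((Set.Ico a b).indicator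
              (truncHilbert (σ.restrict (Set.Ico a b)) 1 ε)) ≤
            C * Real.sqrt (σ (Set.Ico a b)).toReal) →
        -- ... and for `w` ...
        (∀ a b ε : ℝ, a < b → 0 < ε →
          l2norm σ ((Set.Ico a b).indicator
              (truncHilbert (w.restrict (Set.Ico a b)) 1 ε)) ≤
            C * Real.sqrt (w (Set.Ico a b)).toReal) →
        -- ... imply the local testing conditions for `B`:
        LocalTesting σ w B C C) := by
  have hlim : ∀ f g, InF f → InF g → DisjointlySupported f g →
      Tendsto (truncPairing σ w f g) (𝓝[>] 0) (𝓝 (hilbertPairing σ w f g)) :=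
    fun f g hf hg => tendsto_truncPairing_of_disjointlySupported hA hA' hf hg
  have hIco := truncPairingBounded_indicator_Ico
    (fun f g hf hg hfg => (hlim f g hf hg hfg).isBigO_one ℝ) fun a b hab => by
      obtain ⟨M, hM⟩ := hWBP a b hab
      exact (isBigO_one_iff ℝ).2 ⟨M, eventually_mem_nhdsWithin.mono hM⟩
  have hB : ∀ f g, InF f → InF g →
      Tendsto (truncPairing σ w f g) truncUltrafilter (𝓝 (limPairing σ w f g)) :=
    fun f g hf hg => (InF.truncPairingBounded hIco hf hg).tendsto_limPairing
  have hpos : ∀ᶠ ε in (truncUltrafilter : Filter ℝ), 0 < ε :=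
    truncUltrafilter_le self_mem_nhdsWithin
  exact ⟨limPairing σ w,
    .of_tendsto (hpos.mono fun ε hε => bilinearOnF_truncPairing σ w hε) hB,
    fun f g hf hg hfg =>
      tendsto_nhds_unique (hB f g hf hg) ((hlim f g hf hg hfg).mono_left truncUltrafilter_le),
    fun C _ hσ hw => .of_tendsto (hpos.mono fun ε hε => localTesting_truncPairing hε
      (fun a b hab => hσ a b ε hab hε) fun a b hab => hw a b ε hab hε) hB⟩
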